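/- Let ℓ be a prime, r ≥ 1 an integer, v₀ ∈ (ℤ/ℓ^rℤ)² and M₀ ∈ M₂(ℤ/ℓ^rℤ). Suppose det(M₀ − I) = 0 in ℤ/ℓ^rℤ, v₀ ∈ Row(M₀ − I), and the reduction of M₀ modulo ℓ is not the identity matrix. Then the sequence N_k(v₀,M₀)/ℓ^{6(k−r)} converges as k → ∞ and its limit equals ℓ/(ℓ+1). -/

import Mathlib

open Matrix Filter Topology

/-- `N_k(v₀, M₀)`: the number of pairs `(v, M) ∈ (ℤ/ℓ^kℤ)² × M₂(ℤ/ℓ^kℤ)` whose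
reduction mod `ℓ^r` is `(v₀, M₀)` and such that `v` lies in the row space of `M - I`. -/
noncomputable def liftCount (ℓ r k : ℕ) (hrk : r ≤ k) (v₀ : Fin 2 → ZMod (ℓ ^ r))
    (M₀ : Matrix (Fin 2) (Fin 2) (ZMod (ℓ ^ r))) : ℕ :=
  Nat.card {p : (Fin 2 → ZMod (ℓ ^ k)) × Matrix (Fin 2) (Fin 2) (ZMod (ℓ ^ k)) //
    (∀ i, ZMod.castHom (pow_dvd_pow ℓ hrk) (ZMod (ℓ ^ r)) (p.1 i) = v₀ i) ∧
    p.2.map (ZMod.castHom (pow_dvd_pow ℓ hrk) (ZMod (ℓ ^ r))) = M₀ ∧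
    ∃ x : Fin 2 → ZMod (ℓ ^ k), x ᵥ* (p.2 - 1) = p.1}

namespace LC

abbrev ch {ℓ r k : ℕ} (h : r ≤ k) : ZMod (ℓ ^ k) →+* ZMod (ℓ ^ r) :=
  ZMod.castHom (pow_dvd_pow ℓ h) (ZMod (ℓ ^ r))

lemma cast_zero_iff {ℓ : ℕ} (hℓ : ℓ.Prime) {n m : ℕ} [NeZero n] (h : m ∣ n) (x : ZMod n) :
    ZMod.castHom h (ZMod m) x = 0 ↔ (m : ZMod n) ∣ x := by
  constructor
  · intro hx
    rw [← ZMod.natCast_zmod_val x, map_natCast, ZMod.natCast_eq_zero_iff] at hx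
    rw [← ZMod.natCast_zmod_val x]
    exact Nat.cast_dvd_cast hx
  · rintro ⟨y, rfl⟩
    rw [map_mul, map_natCast]; simp

lemma isUnit_of {ℓ : ℕ} (hℓ : ℓ.Prime) {k : ℕ} (hk : k ≠ 0) (x : ZMod (ℓ ^ k))
    (h : ¬ (ℓ : ZMod (ℓ ^ k)) ∣ x) : IsUnit x := by
  haveI : NeZero (ℓ ^ k) := ⟨pow_ne_zero _ hℓ.ne_zero⟩
  rw [← ZMod.natCast_zmod_val x] at h ⊢
  rw [ZMod.isUnit_iff_coprime]
  apply Nat.Coprime.pow_right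
  rw [Nat.coprime_comm, hℓ.coprime_iff_not_dvd]
  intro hd
  exact h (Nat.cast_dvd_cast hd)

lemma card_ker {ℓ : ℕ} (hℓ : ℓ.Prime) (r j : ℕ) :
    Nat.card {x : ZMod (ℓ ^ (r + j)) // (ℓ : ZMod (ℓ ^ (r + j))) ^ r ∣ x} = ℓ ^ j := by
  haveI : NeZero (ℓ ^ (r + j)) := ⟨pow_ne_zero _ hℓ.ne_zero⟩
  let f := ZMod.castHom (pow_dvd_pow ℓ (Nat.le_add_right r j)) (ZMod (ℓ ^ r))
  have h1 := AddSubgroup.card_eq_card_quotient_mul_card_addSubgroup f.toAddMonoidHom.ker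
  have h2 : Nat.card (ZMod (ℓ ^ (r + j)) ⧸ f.toAddMonoidHom.ker) = ℓ ^ r := by
    rw [Nat.card_congr (QuotientAddGroup.quotientKerEquivOfSurjective f.toAddMonoidHom
      (ZMod.castHom_surjective (pow_dvd_pow ℓ (Nat.le_add_right r j)))).toEquiv, Nat.card_zmod]
  rw [h2, Nat.card_zmod] at h1
  replace h1 := (pow_add ℓ r j).symm.trans h1
  have h3 := Nat.eq_of_mul_eq_mul_left (pow_pos hℓ.pos r) h1
  rw [h3]
  apply Nat.card_congr
  apply Equiv.subtypeEquivRight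
  intro x
  have := cast_zero_iff hℓ (pow_dvd_pow ℓ (Nat.le_add_right r j)) x
  push_cast at this
  rw [← this]
  rfl

/-- pairs `(D, w)` divisible by `ℓ^r` with `D ∣ w`. -/
abbrev P (ℓ k r : ℕ) : Type := {q : ZMod (ℓ ^ k) × ZMod (ℓ ^ k) //
    (ℓ : ZMod (ℓ ^ k)) ^ r ∣ q.1 ∧ (ℓ : ZMod (ℓ ^ k)) ^ r ∣ q.2 ∧ q.1 ∣ q.2}

lemma card_P_zero {ℓ : ℕ} (r : ℕ) : Nat.card (P ℓ (r + 0) r) = 1 := by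
  have h0 : (ℓ : ZMod (ℓ ^ (r + 0))) ^ r = 0 := by
    rw [← Nat.cast_pow]; simp
  rw [Nat.card_eq_one_iff_unique]
  refine ⟨⟨?_⟩, ⟨⟨(0, 0), by simp⟩⟩⟩
  rintro ⟨⟨a, b⟩, h1, h2, h3⟩ ⟨⟨a', b'⟩, h1', h2', h3'⟩
  simp only [h0, zero_dvd_iff] at h1 h2 h1' h2'
  simp [*]

lemma card_P_succ {ℓ : ℕ} (hℓ : ℓ.Prime) (r j : ℕ) (k : ℕ) (hk : k = r + (j + 1)) :
    Nat.card (P ℓ k r) = Nat.card (P ℓ k (r + 1)) + (ℓ ^ (j + 1) - ℓ ^ j) * ℓ ^ (j + 1) := by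
  classical
  haveI : NeZero (ℓ ^ k) := ⟨pow_ne_zero _ hℓ.ne_zero⟩
  set p : ZMod (ℓ ^ k) := (ℓ : ZMod (ℓ ^ k)) with hp
  have hc1 : (Finset.univ.filter fun x : ZMod (ℓ ^ k) => p ^ r ∣ x).card = ℓ ^ (j + 1) := by
    subst hk
    rw [← card_ker hℓ r (j + 1), Nat.card_eq_fintype_card, Fintype.card_subtype]
  have hc2 : (Finset.univ.filter fun x : ZMod (ℓ ^ k) => p ^ (r + 1) ∣ x).card = ℓ ^ j := by
    obtain rfl : k = (r + 1) + j := by omega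
    rw [← card_ker hℓ (r + 1) j, Nat.card_eq_fintype_card, Fintype.card_subtype]
  have key : (Finset.univ.filter fun q : ZMod (ℓ ^ k) × ZMod (ℓ ^ k) =>
      p ^ r ∣ q.1 ∧ p ^ r ∣ q.2 ∧ q.1 ∣ q.2) =
      (Finset.univ.filter fun q : ZMod (ℓ ^ k) × ZMod (ℓ ^ k) =>
        p ^ (r + 1) ∣ q.1 ∧ p ^ (r + 1) ∣ q.2 ∧ q.1 ∣ q.2) ∪
      (((Finset.univ.filter fun x : ZMod (ℓ ^ k) => p ^ r ∣ x) \
        (Finset.univ.filter fun x : ZMod (ℓ ^ k) => p ^ (r + 1) ∣ x)) ×ˢ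
        (Finset.univ.filter fun x : ZMod (ℓ ^ k) => p ^ r ∣ x)) := by
    ext ⟨D, w⟩
    simp only [Finset.mem_filter, Finset.mem_univ, true_and, Finset.mem_union,
      Finset.mem_product, Finset.mem_sdiff]
    have hle : p ^ r ∣ p ^ (r + 1) := pow_dvd_pow _ (Nat.le_succ r)
    constructor
    · rintro ⟨h1, h2, h3⟩
      by_cases h : p ^ (r + 1) ∣ D
      · exact Or.inl ⟨h, h.trans h3, h3⟩
      · exact Or.inr ⟨⟨h1, h⟩, h2⟩
    · rintro (⟨h1, h2, h3⟩ | ⟨⟨h1, h2⟩, h3⟩)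
      · exact ⟨hle.trans h1, hle.trans h2, h3⟩
      · refine ⟨h1, h3, ?_⟩
        obtain ⟨y, rfl⟩ := h1
        have hy : IsUnit y := by
          apply isUnit_of hℓ (by omega)
          intro hd
          apply h2
          rw [pow_succ]
          exact mul_dvd_mul_left _ hd
        exact (hy.mul_right_dvd).2 h3
  have hdis : Disjoint (Finset.univ.filter fun q : ZMod (ℓ ^ k) × ZMod (ℓ ^ k) =>
        p ^ (r + 1) ∣ q.1 ∧ p ^ (r + 1) ∣ q.2 ∧ q.1 ∣ q.2)
      (((Finset.univ.filter fun x : ZMod (ℓ ^ k) => p ^ r ∣ x) \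
        (Finset.univ.filter fun x : ZMod (ℓ ^ k) => p ^ (r + 1) ∣ x)) ×ˢ
        (Finset.univ.filter fun x : ZMod (ℓ ^ k) => p ^ r ∣ x)) := by
    rw [Finset.disjoint_left]
    rintro ⟨D, w⟩ h1 h2
    simp only [Finset.mem_filter, Finset.mem_univ, true_and,
      Finset.mem_product, Finset.mem_sdiff] at h1 h2
    exact h2.1.2 h1.1
  rw [Nat.card_eq_fintype_card, Fintype.card_subtype, Nat.card_eq_fintype_card,
    Fintype.card_subtype, key, Finset.card_union_of_disjoint hdis, Finset.card_product,
    Finset.card_sdiff_of_subset, hc1, hc2]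
  intro x
  simp only [Finset.mem_filter, Finset.mem_univ, true_and]
  exact fun h => (pow_dvd_pow _ (Nat.le_succ r)).trans h

lemma card_P {ℓ : ℕ} (hℓ : ℓ.Prime) (j : ℕ) : ∀ (r k : ℕ), k = r + j →
    (Nat.card (P ℓ k r) : ℝ) * (ℓ + 1) = ℓ ^ (2 * j + 1) + 1 := by
  induction j with
  | zero => 
    intro r k hk
    have h := card_P_zero (ℓ := ℓ) r
    rw [← hk] at h
    rw [h]; simp
  | succ j ih =>
    intro r k hk
    have h := ih (r + 1) k (by omega)
    rw [card_P_succ hℓ r j k hk, Nat.cast_add, add_mul, h, Nat.cast_mul,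
      Nat.cast_sub (Nat.pow_le_pow_right hℓ.pos (by omega : j ≤ j + 1))]
    push_cast
    ring

/-- row space condition. -/
lemma row_iff {R : Type*} [CommRing R] (v : Fin 2 → R) (A : Matrix (Fin 2) (Fin 2) R)
    (ha : IsUnit (A 0 0)) :
    (∃ x : Fin 2 → R, x ᵥ* A = v) ↔ A.det ∣ A 0 0 * v 1 - A 0 1 * v 0 := by
  obtain ⟨a', ha'⟩ := ha.exists_right_inv
  rw [Matrix.det_fin_two]
  constructor
  · rintro ⟨x, rfl⟩
    refine ⟨x 1, ?_⟩
    simp [Matrix.vecMul, dotProduct, Fin.sum_univ_two]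
    ring
  · rintro ⟨y, hy⟩
    refine ⟨![a' * (v 0 - y * A 1 0), y], ?_⟩
    ext i
    fin_cases i
    · simp [Matrix.vecMul, dotProduct, Fin.sum_univ_two]
      linear_combination (v 0 - y * A 1 0) * ha'
    · simp [Matrix.vecMul, dotProduct, Fin.sum_univ_two]
      linear_combination (-a') * hy + (v 1 - y * A 1 1) * ha'

/-- Lifts of (v₀, A₀). -/
abbrev L {R S : Type*} [CommRing R] [CommRing S] (f : R →+* S)
    (v₀ : Fin 2 → S) (A₀ : Matrix (Fin 2) (Fin 2) S) : Type _ :=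
  {p : (Fin 2 → R) × Matrix (Fin 2) (Fin 2) R //
    (∀ i, f (p.1 i) = v₀ i) ∧ (∀ i j, f (p.2 i j) = A₀ i j) ∧
    ∃ x : Fin 2 → R, x ᵥ* p.2 = p.1}

lemma card_L_perm {R S : Type*} [CommRing R] [CommRing S] (f : R →+* S)
    (v₀ : Fin 2 → S) (A₀ : Matrix (Fin 2) (Fin 2) S) (σ τ : Equiv.Perm (Fin 2)) :
    Nat.card (L f v₀ A₀) = Nat.card (L f (v₀ ∘ τ) (A₀.submatrix σ τ)) := by
  apply Nat.card_congr
  refine Equiv.subtypeEquiv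
    (Equiv.prodCongr (Equiv.arrowCongr τ.symm (Equiv.refl R)) (Matrix.reindex σ.symm τ.symm)) ?_
  rintro ⟨v, A⟩
  simp only [Equiv.prodCongr_apply, Prod.map]
  refine and_congr ?_ (and_congr ?_ ?_)
  · constructor
    · intro h i; simpa using h (τ i)
    · intro h i; simpa using h (τ.symm i)
  · constructor
    · intro h i j; simpa using h (σ i) (τ j)
    · intro h i j; simpa using h (σ.symm i) (τ.symm j)
  · have hk : ∀ x : Fin 2 → R, (x ∘ σ) ᵥ* (A.submatrix σ τ) = (x ᵥ* A) ∘ τ := by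
      intro x
      rw [Matrix.submatrix_vecMul_equiv]
      simp [Function.comp_assoc]
    constructor
    · rintro ⟨x, rfl⟩
      refine ⟨x ∘ σ, ?_⟩
      simp [hk]; rfl
    · rintro ⟨x, hx⟩
      refine ⟨x ∘ σ.symm, ?_⟩
      have := hk (x ∘ σ.symm)
      simp [Function.comp_assoc] at this
      simp at hx
      rw [hx] at this
      funext i
      have := congrFun this (τ.symm i)
      simpa using this.symm

lemma card_L {R S : Type*} [CommRing R] [CommRing S] (f : R →+* S)
    (hf : Function.Surjective f)
    (v₀ : Fin 2 → S) (A₀ : Matrix (Fin 2) (Fin 2) S)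
    (hu : ∀ a, f a = A₀ 0 0 → IsUnit a) (hdet : A₀.det = 0)
    (hrow : ∃ x : Fin 2 → S, x ᵥ* A₀ = v₀) :
    Nat.card (L f v₀ A₀) = Nat.card (({x : R // f x = 0} × {x : R // f x = 0} ×
      {x : R // f x = 0} × {x : R // f x = 0}) ×
      {q : R × R // f q.1 = 0 ∧ f q.2 = 0 ∧ q.1 ∣ q.2}) := by
  obtain ⟨a₀, ha₀⟩ := hf (A₀ 0 0)
  obtain ⟨b₀, hb₀⟩ := hf (A₀ 0 1)
  obtain ⟨c₀, hc₀⟩ := hf (A₀ 1 0)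
  obtain ⟨s₀, hs₀⟩ := hf (v₀ 0)
  have hu₀ : IsUnit (A₀ 0 0) := ha₀ ▸ (hu a₀ ha₀).map f
  have hw := (row_iff v₀ A₀ hu₀).1 hrow
  rw [hdet, zero_dvd_iff] at hw
  rw [Matrix.det_fin_two] at hdet
  let F : L f v₀ A₀ → ({x : R // f x = 0} × {x : R // f x = 0} ×
      {x : R // f x = 0} × {x : R // f x = 0}) ×
      {q : R × R // f q.1 = 0 ∧ f q.2 = 0 ∧ q.1 ∣ q.2} := fun p =>
    ⟨⟨⟨p.1.2 0 0 - a₀, by rw [map_sub, p.2.2.1, ha₀, sub_self]⟩,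
      ⟨p.1.2 0 1 - b₀, by rw [map_sub, p.2.2.1, hb₀, sub_self]⟩,
      ⟨p.1.2 1 0 - c₀, by rw [map_sub, p.2.2.1, hc₀, sub_self]⟩,
      ⟨p.1.1 0 - s₀, by rw [map_sub, p.2.1, hs₀, sub_self]⟩⟩,
      ⟨(p.1.2.det, p.1.2 0 0 * p.1.1 1 - p.1.2 0 1 * p.1.1 0), by
        refine ⟨?_, ?_, ?_⟩
        · simp only [Matrix.det_fin_two, map_sub, map_mul, p.2.2.1]; exact hdet
        · simp only [map_sub, map_mul, p.2.2.1, p.2.1]; exact hw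
        · exact (row_iff _ _ (hu _ (p.2.2.1 0 0))).1 p.2.2.2⟩⟩
  apply Nat.card_congr
  refine Equiv.ofBijective F ⟨?_, ?_⟩
  · rintro ⟨⟨v, A⟩, h1, h2, h3⟩ ⟨⟨v', A'⟩, h1', h2', h3'⟩ h
    simp only [F, Prod.mk.injEq, Subtype.mk.injEq, Matrix.det_fin_two, sub_left_inj] at h
    obtain ⟨⟨ha, hb, hc, hs⟩, hD, hW⟩ := h
    have hua := hu _ (h2 0 0)
    simp only at hua
    rw [← ha, ← hb, ← hc] at hD
    rw [← ha, ← hb, ← hs] at hW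
    have hd : A 1 1 = A' 1 1 := hua.mul_left_cancel (by linear_combination hD)
    have ht : v 1 = v' 1 := hua.mul_left_cancel (by linear_combination hW)
    have hv : v = v' := by
      ext i; fin_cases i <;> assumption
    have hA : A = A' := by
      ext i j; fin_cases i <;> fin_cases j <;> assumption
    subst hv; subst hA; rfl
  · rintro ⟨⟨⟨a, ha⟩, ⟨b, hb⟩, ⟨c, hc⟩, ⟨s, hs⟩⟩, ⟨⟨D, w⟩, hD, hW, hdvd⟩⟩
    simp only at hD hW hdvd
    have h00 : f (a + a₀) = A₀ 0 0 := by rw [map_add, ha, ha₀, zero_add]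
    have h01 : f (b + b₀) = A₀ 0 1 := by rw [map_add, hb, hb₀, zero_add]
    have h10 : f (c + c₀) = A₀ 1 0 := by rw [map_add, hc, hc₀, zero_add]
    have h0 : f (s + s₀) = v₀ 0 := by rw [map_add, hs, hs₀, zero_add]
    have hua := hu _ h00
    obtain ⟨e, he⟩ := hua.exists_right_inv
    have hfe : A₀ 0 0 * f e = 1 := by rw [← h00, ← map_mul, he, map_one]
    let A : Matrix (Fin 2) (Fin 2) R :=
      !![a + a₀, b + b₀; c + c₀, e * (D + (b + b₀) * (c + c₀))]
    let v : Fin 2 → R := ![s + s₀, e * (w + (b + b₀) * (s + s₀))]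
    have e1 : A.det = D := by
      rw [Matrix.det_fin_two]
      simp only [A, of_apply, cons_val', cons_val_zero, cons_val_one, cons_val_fin_one]
      linear_combination (D + (b + b₀) * (c + c₀)) * he
    have e2 : A 0 0 * v 1 - A 0 1 * v 0 = w := by
      simp only [A, v, of_apply, cons_val', cons_val_zero, cons_val_one, cons_val_fin_one]
      linear_combination (w + (b + b₀) * (s + s₀)) * he
    have h11 : f (A 1 1) = A₀ 1 1 := by
      simp only [A, of_apply, cons_val', cons_val_zero, cons_val_one, cons_val_fin_one]
      rw [map_mul, map_add f D, map_mul, h01, h10, hD]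
      linear_combination (-f e) * hdet + A₀ 1 1 * hfe
    have h1 : f (v 1) = v₀ 1 := by
      simp only [v, of_apply, cons_val', cons_val_zero, cons_val_one, cons_val_fin_one]
      rw [map_mul, map_add f w, map_mul, h01, h0, hW]
      linear_combination (-f e) * hw + v₀ 1 * hfe
    refine ⟨⟨(v, A), ?_, ?_, ?_⟩, ?_⟩
    · intro i; fin_cases i
      · exact h0
      · exact h1
    · intro i j; fin_cases i <;> fin_cases j
      · exact h00
      · exact h01
      · exact h10
      · exact h11
    · rw [row_iff _ _ hua]
      rw [e1, e2]; exact hdvd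
    · simp only [F, Prod.mk.injEq, Subtype.mk.injEq]
      refine ⟨⟨?_, ?_, ?_, ?_⟩, e1, e2⟩ <;> simp [A, v]

end LC

/-- Suppose `det(M₀ - I) = 0` in `ℤ/ℓ^rℤ`, `v₀ ∈ Row(M₀ - I)`, and `M₀` does not
reduce to the identity modulo `ℓ`.  Then `N_k(v₀, M₀)/ℓ^(6(k-r))` converges (as
`k = r + j → ∞`) to `ℓ/(ℓ+1)`. -/
theorem stmt_7 (ℓ : ℕ) (hℓ : ℓ.Prime) (r : ℕ) (hr : 1 ≤ r)
    (v₀ : Fin 2 → ZMod (ℓ ^ r)) (M₀ : Matrix (Fin 2) (Fin 2) (ZMod (ℓ ^ r)))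
    (hdet : (M₀ - 1).det = 0)
    (hrow : ∃ x : Fin 2 → ZMod (ℓ ^ r), x ᵥ* (M₀ - 1) = v₀)
    (hnotI : M₀.map (ZMod.castHom (dvd_pow_self ℓ (by omega : r ≠ 0)) (ZMod ℓ)) ≠ 1) :
    Tendsto
      (fun j : ℕ =>
        (liftCount ℓ r (r + j) (Nat.le_add_right r j) v₀ M₀ : ℝ) / (ℓ : ℝ) ^ (6 * j))
      atTop (𝓝 ((ℓ : ℝ) / ((ℓ : ℝ) + 1))) := by
  have hr0 : r ≠ 0 := by omega
  have hℓ0 : (ℓ : ℝ) ≠ 0 := Nat.cast_ne_zero.2 hℓ.ne_zero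
  have hℓ1 : (ℓ : ℝ) + 1 ≠ 0 := by positivity
  -- a unit entry
  obtain ⟨i, j₀, hij⟩ : ∃ i j, ZMod.castHom (dvd_pow_self ℓ hr0) (ZMod ℓ) ((M₀ - 1) i j) ≠ 0 := by
    by_contra! hcon
    apply hnotI
    ext i j
    have := hcon i j
    rw [Matrix.sub_apply, map_sub, sub_eq_zero] at this
    rw [Matrix.map_apply, this, Matrix.one_apply, Matrix.one_apply]
    split_ifs
    · exact map_one _
    · exact map_zero _
  have hcount : ∀ j : ℕ, liftCount ℓ r (r + j) (Nat.le_add_right r j) v₀ M₀ =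
      (ℓ ^ j) ^ 4 * Nat.card (LC.P ℓ (r + j) r) := by
    intro j
    haveI : NeZero (ℓ ^ (r + j)) := ⟨pow_ne_zero _ hℓ.ne_zero⟩
    set f := ZMod.castHom (pow_dvd_pow ℓ (Nat.le_add_right r j)) (ZMod (ℓ ^ r)) with hf
    have hfs : Function.Surjective f := ZMod.castHom_surjective _
    have hker : ∀ x, f x = 0 ↔ (ℓ : ZMod (ℓ ^ (r + j))) ^ r ∣ x := by
      intro x
      have := LC.cast_zero_iff hℓ (pow_dvd_pow ℓ (Nat.le_add_right r j)) x
      push_cast at this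
      exact this
    have h1 : liftCount ℓ r (r + j) (Nat.le_add_right r j) v₀ M₀ =
        Nat.card (LC.L f v₀ (M₀ - 1)) := by
      apply Nat.card_congr
      refine Equiv.subtypeEquiv (Equiv.prodCongr (Equiv.refl _) (Equiv.subRight 1)) ?_
      rintro ⟨v, M⟩
      simp only [Equiv.prodCongr_apply, Prod.map, Equiv.refl_apply, Equiv.subRight_apply]
      refine and_congr Iff.rfl (and_congr ?_ Iff.rfl)
      have h1 : ∀ a b, f ((1 : Matrix (Fin 2) (Fin 2) (ZMod (ℓ ^ (r + j)))) a b) =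
          (1 : Matrix (Fin 2) (Fin 2) (ZMod (ℓ ^ r))) a b := by
        intro a b
        rw [Matrix.one_apply, Matrix.one_apply]
        split_ifs
        · exact map_one _
        · exact map_zero _
      rw [← Matrix.ext_iff]
      simp only [Matrix.sub_apply, map_sub, Matrix.map_apply, h1, sub_left_inj, ← hf]
    have hM : ∀ σ τ : Equiv.Perm (Fin 2), ((M₀ - 1).submatrix σ τ).det = 0 := by
      intro σ τ
      have : (M₀ - 1).submatrix σ τ = ((M₀ - 1).submatrix σ id).submatrix id τ := by
        simp
      rw [this, Matrix.det_permute', Matrix.det_permute, hdet]; simp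
    rw [h1, LC.card_L_perm f v₀ (M₀ - 1) (Equiv.swap 0 i) (Equiv.swap 0 j₀), LC.card_L f hfs]
    · have hK : Nat.card {x // f x = 0} = ℓ ^ j := by
        rw [← LC.card_ker hℓ r j]
        exact Nat.card_congr (Equiv.subtypeEquivRight hker)
      simp only [Nat.card_prod, hK]
      congr 1
      · ring
      · apply Nat.card_congr
        apply Equiv.subtypeEquivRight
        intro q
        rw [hker, hker]
    · intro a ha
      simp only [Matrix.submatrix_apply, Equiv.swap_apply_left] at ha
      apply LC.isUnit_of hℓ (by omega)
      rintro ⟨y, rfl⟩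
      apply hij
      rw [← ha, map_mul, map_mul, map_natCast, map_natCast]
      simp
    · exact hM _ _
    · obtain ⟨x, hx⟩ := hrow
      refine ⟨x ∘ Equiv.swap 0 i, ?_⟩
      rw [Matrix.submatrix_vecMul_equiv, ← hx, Function.comp_assoc, Equiv.self_comp_symm,
        Function.comp_id]
  have hfun : (fun j : ℕ =>
        (liftCount ℓ r (r + j) (Nat.le_add_right r j) v₀ M₀ : ℝ) / (ℓ : ℝ) ^ (6 * j)) =
      fun j : ℕ => (ℓ : ℝ) / (ℓ + 1) + (1 / ((ℓ : ℝ) + 1)) * ((1 / (ℓ : ℝ) ^ 2) ^ j) := by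
    funext j
    have h := LC.card_P hℓ j r (r + j) rfl
    rw [← eq_div_iff hℓ1] at h
    rw [hcount j, Nat.cast_mul, h]
    push_cast
    rw [div_pow, one_pow]
    field_simp
    ring
  rw [hfun]
  have hlt : 1 / (ℓ : ℝ) ^ 2 < 1 := by
    have : (1 : ℝ) < ℓ := by exact_mod_cast hℓ.one_lt
    rw [div_lt_one (by positivity)]
    exact one_lt_pow₀ this (by norm_num)
  have := (tendsto_pow_atTop_nhds_zero_of_lt_one (by positivity) hlt).const_mul (1 / ((ℓ : ℝ) + 1))
  simpa using this.const_add ((ℓ : ℝ) / (ℓ + 1))
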